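/- Let u be a continuously differentiable function on a neighborhood of the closure of I, and define v by v(x) = u'(x) if x ∉ M or x is an atom of μ, and v(x) = 0 otherwise. Then there exists a sequence (u_n) of continuously differentiable functions such that u_n → u in L²(μ) and u_n' → v in L²(μ); in particular v is a μ-gradient of u which vanishes μ-a.e. on M minus the atoms of μ. -/

import Mathlib

open MeasureTheory Filter Set
open scoped ENNReal Classical


theorem aux_phi (c d : ℝ) (μ : Measure ℝ)
    (f : ℝ → ℝ) (hfmeas : Measurable f) (hfnonneg : 0 ≤ f)
    (μs : Measure ℝ) (hsing : μs ⟂ₘ volume)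
    (hdecomp : μ = volume.withDensity (fun x => ENNReal.ofReal (f x)) + μs)
    (hinf : ∫⁻ t in Ioo c d, (ENNReal.ofReal (f t))⁻¹ = ⊤) (η : ℝ) (hη : 0 < η) :
    ∃ φ : ℝ → ℝ, Measurable φ ∧ (∀ x, 0 ≤ φ x) ∧ (∃ B, ∀ x, φ x ≤ B) ∧
      (∀ x, x ∉ Ioo c d → φ x = 0) ∧ ∫ x, φ x = 1 ∧ eLpNorm φ 2 μ ≤ ENNReal.ofReal η := by
  obtain ⟨N, hNm, hN1, hN2⟩ := hsing
  set S := N ∩ Ioo c d with hS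
  have hSm : MeasurableSet S := hNm.inter measurableSet_Ioo
  set ψ : ℕ → ℝ → ℝ := fun n => S.indicator (fun x => (max (f x) (1 / ((n : ℝ) + 1)))⁻¹) with hψ
  have hpos : ∀ n : ℕ, 0 < 1 / ((n : ℝ) + 1) := fun n => by positivity
  have hψm : ∀ n, Measurable (ψ n) := fun n =>
    ((hfmeas.max measurable_const).inv).indicator hSm
  have hψ0 : ∀ n x, 0 ≤ ψ n x := fun n x =>
    indicator_nonneg (fun y _ => inv_nonneg.2 (le_max_of_le_left (hfnonneg y))) x
  have hψB : ∀ n x, ψ n x ≤ (n : ℝ) + 1 := by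
    intro n x
    simp only [hψ, indicator]
    split_ifs
    · rw [inv_le_comm₀ (lt_max_of_lt_right (hpos n)) (by positivity)]
      rw [← one_div]; exact le_max_right _ _
    · positivity
  have hψsupp : ∀ n x, x ∉ Ioo c d → ψ n x = 0 := fun n x hx =>
    indicator_of_notMem (fun h => hx h.2) _
  have htop : Tendsto (fun n => ∫⁻ x, ENNReal.ofReal (ψ n x)) atTop (nhds ⊤) := by
    have h1 : ∫⁻ x, S.indicator (fun t => (ENNReal.ofReal (f t))⁻¹) x = ⊤ := by
      rw [lintegral_indicator hSm, ← hinf]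
      apply setLIntegral_congr
      rw [hS]
      have : (N : Set ℝ) =ᵐ[volume] univ := by
        rw [ae_eq_univ]; exact hN2
      simpa using this.inter (ae_eq_refl (Ioo c d))
    rw [← h1]
    apply lintegral_tendsto_of_tendsto_of_monotone
    · exact fun n => (hψm n).ennreal_ofReal.aemeasurable
    · refine Eventually.of_forall fun x m n hmn => ?_
      apply ENNReal.ofReal_le_ofReal
      simp only [hψ, indicator]
      split_ifs
      · apply inv_anti₀ (lt_max_of_lt_right (hpos n))
        apply max_le_max le_rfl
        apply one_div_le_one_div_of_le (by positivity)
        exact_mod_cast Nat.succ_le_succ hmn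
      · exact le_rfl
    · refine Eventually.of_forall fun x => ?_
      by_cases hx : x ∈ S
      · simp only [hψ, indicator_of_mem hx]
        have h2 : ∀ n : ℕ, ENNReal.ofReal ((max (f x) (1 / ((n : ℝ) + 1)))⁻¹)
            = (ENNReal.ofReal (max (f x) (1 / ((n : ℝ) + 1))))⁻¹ := fun n =>
          ENNReal.ofReal_inv_of_pos (lt_max_of_lt_right (hpos n))
        simp only [h2]
        apply tendsto_inv_iff.2
        apply ENNReal.tendsto_ofReal
        have := (tendsto_const_nhds (x := f x)).max (tendsto_one_div_add_atTop_nhds_zero_nat (𝕜 := ℝ))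
        rwa [max_eq_left (show (0 : ℝ) ≤ f x from hfnonneg x)] at this
      · simp [hψ, hx]
  obtain ⟨n, hn⟩ := (htop.eventually (lt_mem_nhds (ENNReal.ofReal_lt_top (r := 1 / η ^ 2)))).exists
  have hint : Integrable (ψ n) := by
    have : IntegrableOn (ψ n) (Ioo c d) :=
      Measure.integrableOn_of_bounded (M := (n : ℝ) + 1) (by simp) (hψm n).aestronglyMeasurable
        (Eventually.of_forall fun x => by
          rw [Real.norm_of_nonneg (hψ0 n x)]; exact hψB n x)
    exact (integrableOn_iff_integrable_of_support_subset (fun x hx => by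
      by_contra h; exact hx (hψsupp n x h))).1 this
  set T := ∫ x, ψ n x with hT
  have hTl : ∫⁻ x, ENNReal.ofReal (ψ n x) = ENNReal.ofReal T :=
    (ofReal_integral_eq_lintegral_ofReal hint (Eventually.of_forall (hψ0 n))).symm
  rw [hTl] at hn
  have hT1 : 1 / η ^ 2 < T := (ENNReal.ofReal_lt_ofReal_iff_of_nonneg (by positivity)).1 hn
  have hT0 : 0 < T := lt_trans (by positivity) hT1
  refine ⟨fun x => ψ n x / T, (hψm n).div_const T, fun x => div_nonneg (hψ0 n x) hT0.le,
    ⟨((n : ℝ) + 1) / T, fun x => div_le_div_of_nonneg_right (hψB n x) hT0.le⟩,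
    fun x hx => by simp [hψsupp n x hx], ?_, ?_⟩
  · rw [integral_div, ← hT, div_self hT0.ne']
  · have key : eLpNorm (fun x => ψ n x / T) 2 μ ^ 2 ≤ ENNReal.ofReal η ^ 2 := by
      have e := eLpNorm_nnreal_pow_eq_lintegral (f := fun x => ψ n x / T) (μ := μ) (p := 2) (by norm_num)
      have e' : eLpNorm (fun x => ψ n x / T) 2 μ ^ 2 = ∫⁻ x, ENNReal.ofReal ((ψ n x / T) ^ 2) ∂μ := by
        have e2 : ∀ x, ENNReal.ofReal ((ψ n x / T) ^ 2) = ‖ψ n x / T‖ₑ ^ 2 := by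
          intro x
          rw [Real.enorm_of_nonneg (div_nonneg (hψ0 n x) hT0.le), ENNReal.ofReal_pow (div_nonneg (hψ0 n x) hT0.le)]
        simp only [e2]
        simpa using e
      rw [e', hdecomp, lintegral_add_measure]
      have z : ∫⁻ x, ENNReal.ofReal ((ψ n x / T) ^ 2) ∂μs = 0 := by
        rw [lintegral_eq_zero_iff (((hψm n).div_const T).pow_const 2).ennreal_ofReal]
        have : ∀ᵐ x ∂μs, x ∉ N := measure_eq_zero_iff_ae_notMem.1 hN1
        filter_upwards [this] with x hx
        have : ψ n x = 0 := indicator_of_notMem (fun h => hx h.1) _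
        simp [this]
      rw [z, add_zero, lintegral_withDensity_eq_lintegral_mul _ hfmeas.ennreal_ofReal
        (((hψm n).div_const T).pow_const 2).ennreal_ofReal]
      calc _ ≤ ∫⁻ x, ENNReal.ofReal (1 / T ^ 2) * ENNReal.ofReal (ψ n x) := by
            apply lintegral_mono
            intro x
            simp only [Pi.mul_apply]
            rw [← ENNReal.ofReal_mul (hfnonneg x), ← ENNReal.ofReal_mul (by positivity)]
            apply ENNReal.ofReal_le_ofReal
            have h3 : f x * ψ n x ≤ 1 := by
              simp only [hψ, indicator]
              split_ifs
              · rw [← div_eq_mul_inv, div_le_one (lt_max_of_lt_right (hpos n))]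
                exact le_max_left _ _
              · simp
            have : f x * (ψ n x / T) ^ 2 = 1 / T ^ 2 * (ψ n x * (f x * ψ n x)) := by ring
            rw [this]
            apply mul_le_mul_of_nonneg_left _ (by positivity)
            exact mul_le_of_le_one_right (hψ0 n x) h3
        _ = ENNReal.ofReal (1 / T) := by
            rw [lintegral_const_mul _ (hψm n).ennreal_ofReal, hTl, ← ENNReal.ofReal_mul (by positivity)]
            congr 1; field_simp
        _ ≤ _ := by
            rw [← ENNReal.ofReal_pow hη.le]
            apply ENNReal.ofReal_le_ofReal
            rw [one_div_le hT0 (by positivity)]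
            exact hT1.le
    exact (ENNReal.pow_le_pow_left_iff (by norm_num)).1 key

theorem aux_integrable (c d : ℝ) (w : ℝ → ℝ) (hw : Measurable w) (hB : ∃ B, ∀ x, |w x| ≤ B)
    (hs : ∀ x, x ∉ Ioc c d → w x = 0) : Integrable w := by
  obtain ⟨B, hB⟩ := hB
  have : IntegrableOn w (Ioc c d) :=
    Measure.integrableOn_of_bounded (M := B) (by simp) hw.aestronglyMeasurable
      (Eventually.of_forall fun x => by rw [Real.norm_eq_abs]; exact hB x)
  exact (integrableOn_iff_integrable_of_support_subset (fun x hx => by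
    by_contra h; exact hx (hs x h))).1 this

theorem aux_piece (c d : ℝ) (hcd : c ≤ d) (μ : Measure ℝ)
    (f : ℝ → ℝ) (hfmeas : Measurable f) (hfnonneg : 0 ≤ f)
    (μs : Measure ℝ) (hsing : μs ⟂ₘ volume)
    (hdecomp : μ = volume.withDensity (fun x => ENNReal.ofReal (f x)) + μs)
    (h : ℝ → ℝ) (hh : Measurable h) (C : ℝ) (hC : ∀ x, |h x| ≤ C)
    (hinf : (∃ x ∈ Ioo c d, h x ≠ 0) → ∫⁻ t in Ioo c d, (ENNReal.ofReal (f t))⁻¹ = ⊤)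
    (η : ℝ) (hη : 0 < η) :
    ∃ w : ℝ → ℝ, Measurable w ∧ (∃ B, ∀ x, |w x| ≤ B) ∧ (∀ x, x ∉ Ioc c d → w x = 0) ∧
      eLpNorm (w - (Ioc c d).indicator h) 2 μ ≤ ENNReal.ofReal η ∧ ∫ x, w x = 0 ∧
      ∀ x, |∫ t in Iic x, w t| ≤ 2 * C * (d - c) := by
  have hC0 : 0 ≤ C := (abs_nonneg _).trans (hC 0)
  set k := (Ioc c d).indicator h with hk
  have hkm : Measurable k := hh.indicator measurableSet_Ioc
  have hkB : ∀ x, |k x| ≤ C := by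
    intro x
    simp only [hk, indicator]
    split_ifs
    · exact hC x
    · simpa using hC0
  have hks : ∀ x, x ∉ Ioc c d → k x = 0 := fun x hx => indicator_of_notMem hx _
  have hki := aux_integrable c d k hkm ⟨C, hkB⟩ hks
  have hkabs : ∫ x, |k x| ≤ C * (d - c) := by
    have e : ∫ x, |k x| = ∫ x in Ioc c d, |k x| :=
      (setIntegral_eq_integral_of_forall_compl_eq_zero (fun x hx => by simp [hks x hx])).symm
    rw [e]
    calc ∫ x in Ioc c d, |k x| ≤ ∫ x in Ioc c d, C :=
          integral_mono hki.abs.integrableOn (by simp) hkB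
      _ = C * (d - c) := by simp [hcd]; ring
  set H := ∫ x, k x with hH
  have hHle : |H| ≤ C * (d - c) := (abs_integral_le_integral_abs).trans hkabs
  have hφ : ∃ φ : ℝ → ℝ, Measurable φ ∧ (∀ x, 0 ≤ φ x) ∧ (∃ B, ∀ x, φ x ≤ B) ∧
      (∀ x, x ∉ Ioo c d → φ x = 0) ∧ H * ∫ x, φ x = H ∧ ∫ x, φ x ≤ 1 ∧
      eLpNorm (fun x => H * φ x) 2 μ ≤ ENNReal.ofReal η := by
    by_cases h0 : H = 0
    · exact ⟨fun _ => 0, measurable_const, by simp, ⟨0, by simp⟩, by simp, by simp [h0], by simp,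
        by simp⟩
    · have : ∃ x ∈ Ioo c d, h x ≠ 0 := by
        by_contra hcon
        push Not at hcon
        apply h0
        rw [hH, hk, integral_indicator measurableSet_Ioc, integral_Ioc_eq_integral_Ioo,
          setIntegral_congr_fun measurableSet_Ioo (g := fun _ => 0) (fun x hx => hcon x hx)]
        simp
      obtain ⟨φ, h1, h2, h3, h4, h5, h6⟩ := aux_phi c d μ f hfmeas hfnonneg μs hsing hdecomp
        (hinf this) (η / |H|) (by positivity)
      refine ⟨φ, h1, h2, h3, h4, by simp [h5], by simp [h5], ?_⟩
      have := eLpNorm_const_smul H φ 2 μ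
      have e : (fun x => H * φ x) = H • φ := rfl
      rw [e, this, Real.enorm_eq_ofReal_abs]
      calc _ ≤ ENNReal.ofReal |H| * ENNReal.ofReal (η / |H|) := by gcongr
        _ = _ := by
          rw [← ENNReal.ofReal_mul (abs_nonneg _)]
          congr 1
          field_simp
  obtain ⟨φ, h1, h2, ⟨B, h3⟩, h4, h5, h6, h7⟩ := hφ
  have h4' : ∀ x, x ∉ Ioc c d → φ x = 0 := fun x hx => h4 x (fun h => hx (Ioo_subset_Ioc_self h))
  have hφi := aux_integrable c d φ h1 ⟨B, fun x => by rw [abs_of_nonneg (h2 x)]; exact h3 x⟩ h4'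
  have hwB : ∀ x, |k x - H * φ x| ≤ |k x| + |H| * φ x := fun x => by
    refine (abs_sub _ _).trans ?_
    rw [abs_mul, abs_of_nonneg (h2 x)]
  refine ⟨fun x => k x - H * φ x, hkm.sub (h1.const_mul H), ⟨C + |H| * B, fun x => ?_⟩, ?_, ?_, ?_, ?_⟩
  · refine (hwB x).trans ?_
    have := h3 x; have := hkB x
    gcongr
  · intro x hx; simp [hks x hx, h4' x hx]
  · have e : (fun x => k x - H * φ x) - k = -(fun x => H * φ x) := by
      ext x; simp
    rw [e, eLpNorm_neg]; exact h7
  · rw [integral_sub hki (hφi.const_mul H), integral_const_mul, h5, ← hH, sub_self]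
  · intro x
    have hwi : Integrable (fun x => k x - H * φ x) := hki.sub (hφi.const_mul H)
    calc _ ≤ ∫ t in Iic x, |k t - H * φ t| := abs_integral_le_integral_abs
      _ ≤ ∫ t, |k t - H * φ t| := setIntegral_le_integral hwi.abs (Eventually.of_forall fun _ => abs_nonneg _)
      _ ≤ ∫ t, (|k t| + |H| * φ t) := integral_mono hwi.abs (hki.abs.add (hφi.const_mul |H|)) hwB
      _ = (∫ t, |k t|) + |H| * ∫ t, φ t := by
        rw [integral_add hki.abs (hφi.const_mul |H|), integral_const_mul]
      _ ≤ C * (d - c) + C * (d - c) * 1 := by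
        gcongr
        exact integral_nonneg h2
      _ = _ := by ring

theorem aux_sum_ind (p : ℕ → ℝ) (hp : Monotone p) (h : ℝ → ℝ) (m : ℕ) (x : ℝ) :
    ∑ i ∈ Finset.range m, (Ioc (p i) (p (i + 1))).indicator h x = (Ioc (p 0) (p m)).indicator h x := by
  induction m with
  | zero => simp
  | succ m ih =>
    rw [Finset.sum_range_succ, ih]
    have h1 := hp (Nat.zero_le m)
    have h2 := hp (Nat.le_succ m)
    simp only [indicator, mem_Ioc, Nat.succ_eq_add_one] at *
    grind

theorem aux_glue (a b : ℝ) (hab : a < b) (μ : Measure ℝ)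
    (f : ℝ → ℝ) (hfmeas : Measurable f) (hfnonneg : 0 ≤ f)
    (μs : Measure ℝ) (hsing : μs ⟂ₘ volume)
    (hdecomp : μ = volume.withDensity (fun x => ENNReal.ofReal (f x)) + μs)
    (h : ℝ → ℝ) (hh : Measurable h) (C : ℝ) (hC : ∀ x, |h x| ≤ C)
    (hinf : ∀ c d, a ≤ c → d ≤ b →
      (∃ x ∈ Ioo c d, h x ≠ 0) → ∫⁻ t in Ioo c d, (ENNReal.ofReal (f t))⁻¹ = ⊤)
    (η : ℝ) (hη : 0 < η) :
    ∃ w : ℝ → ℝ, Measurable w ∧ (∃ B, ∀ x, |w x| ≤ B) ∧ (∀ x, x ∉ Ioc a b → w x = 0) ∧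
      eLpNorm (w - (Ioc a b).indicator h) 2 μ ≤ ENNReal.ofReal η ∧
      ∀ x, |∫ t in Iic x, w t| ≤ η := by
  have hC0 : 0 ≤ C := (abs_nonneg _).trans (hC 0)
  obtain ⟨n, hn⟩ := exists_nat_gt (2 * C * (b - a) / η)
  have hn0 : (0 : ℝ) < n := lt_of_le_of_lt (by have := sub_pos.2 hab; positivity) hn
  set s := (b - a) / n with hs
  have hs0 : 0 < s := div_pos (sub_pos.2 hab) hn0
  set p : ℕ → ℝ := fun i => a + i * s with hp
  have hpm : Monotone p := fun i j hij => by
    simp only [hp]; gcongr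
  have hp0 : p 0 = a := by simp [hp]
  have hpn : p n = b := by simp only [hp, hs]; field_simp; ring
  have hstep : ∀ i, p (i + 1) - p i = s := fun i => by simp only [hp]; push_cast; ring
  have hCs : 2 * C * s ≤ η := by
    rw [hs, ← mul_div_assoc, div_le_iff₀ hn0]
    rw [div_lt_iff₀ hη] at hn
    linarith
  have H : ∀ i : ℕ, ∃ w : ℝ → ℝ, i < n → Measurable w ∧ (∃ B, ∀ x, |w x| ≤ B) ∧
      (∀ x, x ∉ Ioc (p i) (p (i + 1)) → w x = 0) ∧
      eLpNorm (w - (Ioc (p i) (p (i + 1))).indicator h) 2 μ ≤ ENNReal.ofReal (η / n) ∧ ∫ x, w x = 0 ∧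
      ∀ x, |∫ t in Iic x, w t| ≤ 2 * C * (p (i + 1) - p i) := by
    intro i
    by_cases hi : i < n
    · obtain ⟨w, hw⟩ := aux_piece (p i) (p (i + 1)) (hpm (Nat.le_succ i)) μ f hfmeas hfnonneg μs hsing
        hdecomp h hh C hC (hinf _ _ (hp0 ▸ hpm (Nat.zero_le i)) (hpn ▸ hpm hi)) (η / n) (by positivity)
      exact ⟨w, fun _ => hw⟩
    · exact ⟨0, fun h => absurd h hi⟩
  choose w hw using H
  have hwi : ∀ i ∈ Finset.range n, Integrable (w i) := fun i hi => by
    obtain ⟨h1, h2, h3, -⟩ := hw i (Finset.mem_range.1 hi)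
    exact aux_integrable _ _ _ h1 h2 h3
  refine ⟨fun x => ∑ i ∈ Finset.range n, w i x, ?_, ?_, ?_, ?_, ?_⟩
  · exact Finset.measurable_fun_sum _ fun i hi => (hw i (Finset.mem_range.1 hi)).1
  · have : ∀ i : ℕ, ∃ B, i < n → ∀ x, |w i x| ≤ B := fun i => by
      by_cases hi : i < n
      · obtain ⟨B, hB⟩ := (hw i hi).2.1
        exact ⟨B, fun _ => hB⟩
      · exact ⟨0, fun h => absurd h hi⟩
    choose B hB using this
    exact ⟨∑ i ∈ Finset.range n, B i, fun x => (Finset.abs_sum_le_sum_abs _ _).trans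
      (Finset.sum_le_sum fun i hi => hB i (Finset.mem_range.1 hi) x)⟩
  · intro x hx
    apply Finset.sum_eq_zero
    intro i hi
    rw [Finset.mem_range] at hi
    apply (hw i hi).2.2.1
    intro h'
    exact hx ⟨lt_of_le_of_lt (hp0 ▸ hpm (Nat.zero_le i)) h'.1, h'.2.trans (hpn ▸ hpm hi)⟩
  · have e : (fun x => ∑ i ∈ Finset.range n, w i x) - (Ioc a b).indicator h
        = ∑ i ∈ Finset.range n, (w i - (Ioc (p i) (p (i + 1))).indicator h) := by
      ext x
      have := aux_sum_ind p hpm h n x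
      rw [hp0, hpn] at this
      simp only [Pi.sub_apply, Finset.sum_apply, Finset.sum_sub_distrib, this]
    rw [e]
    refine (eLpNorm_sum_le (fun i hi => ?_) (by norm_num)).trans ?_
    · exact ((hw i (Finset.mem_range.1 hi)).1.sub (hh.indicator measurableSet_Ioc)).aestronglyMeasurable
    · calc _ ≤ ∑ i ∈ Finset.range n, ENNReal.ofReal (η / n) :=
            Finset.sum_le_sum fun i hi => (hw i (Finset.mem_range.1 hi)).2.2.2.1
        _ = ENNReal.ofReal η := by
          rw [← ENNReal.ofReal_sum_of_nonneg (fun _ _ => by positivity)]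
          congr 1
          simp; field_simp
  · intro x
    rw [integral_finsetSum _ (fun i hi => (hwi i hi).integrableOn)]
    have hz : ∀ i ∈ Finset.range n, x ∉ Ioo (p i) (p (i + 1)) → ∫ t in Iic x, w i t = 0 := by
      intro i hi hx
      obtain ⟨h1, h2, h3, h4, h5, h6⟩ := hw i (Finset.mem_range.1 hi)
      by_cases hx1 : x ≤ p i
      · rw [setIntegral_congr_fun measurableSet_Iic (g := fun _ => 0)
          (fun t ht => h3 t (fun h' => absurd (h'.1.trans_le ht) (not_lt.2 hx1)))]
        simp
      · rw [setIntegral_eq_integral_of_forall_compl_eq_zero, h5]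
        intro t ht
        apply h3
        intro h'
        exact hx ⟨not_le.1 hx1, (not_le.1 ht).trans_le h'.2⟩
    by_cases hex : ∃ j ∈ Finset.range n, x ∈ Ioo (p j) (p (j + 1))
    · obtain ⟨j, hj, hxj⟩ := hex
      rw [Finset.sum_eq_single_of_mem j hj]
      · refine ((hw j (Finset.mem_range.1 hj)).2.2.2.2.2 x).trans ?_
        rw [hstep]; exact hCs
      · intro i hi hij
        apply hz i hi
        intro hxi
        rcases lt_or_gt_of_ne hij with hlt | hlt
        · exact absurd (hxi.2.trans_le (hpm hlt)) (not_lt.2 hxj.1.le)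
        · exact absurd (hxj.2.trans_le (hpm hlt)) (not_lt.2 hxi.1.le)
    · push Not at hex
      rw [Finset.sum_eq_zero fun i hi => hz i hi (hex i hi)]
      simpa using hη.le

/-- For any `C¹` function `u`, the function equal to `u'` outside `M` and at the atoms of
`μ`, and to `0` elsewhere on `M`, is a `μ`-gradient of `u`. -/
theorem truncated_derivative_is_gradient
    (a b : ℝ) (hab : a < b) (I : Set ℝ) (hI : I = Set.Ioo a b)
    (μ : Measure ℝ) [IsFiniteMeasure μ] (hμI : μ Iᶜ = 0)
    (f : ℝ → ℝ) (hfmeas : Measurable f) (hfnonneg : 0 ≤ f)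
    (μs : Measure ℝ) (hsing : μs ⟂ₘ volume)
    (hdecomp : μ = volume.withDensity (fun x => ENNReal.ofReal (f x)) + μs)
    (M : Set ℝ)
    (hM : M = {x ∈ closure I | ∀ ε > 0,
      ∫⁻ t in I ∩ Set.Ioo (x - ε) (x + ε), (ENNReal.ofReal (f t))⁻¹ = ⊤})
    (u : ℝ → ℝ) (hu : ContDiff ℝ 1 u)
    (v : ℝ → ℝ)
    (hv : ∀ x, v x = if x ∉ M ∨ 0 < μ {x} then deriv u x else 0) :
    ∃ U : ℕ → ℝ → ℝ, (∀ n, ContDiff ℝ 1 (U n)) ∧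
      Tendsto (fun n => eLpNorm (fun x => U n x - u x) 2 μ) atTop (nhds 0) ∧
      Tendsto (fun n => eLpNorm (fun x => deriv (U n) x - v x) 2 μ) atTop (nhds 0) := by
  have hMmeas : MeasurableSet M := by
    apply IsClosed.measurableSet
    rw [← isOpen_compl_iff, Metric.isOpen_iff]
    intro x hx
    rw [hM, mem_compl_iff, mem_ofPred_eq, not_and_or] at hx
    rcases hx with hx | hx
    · obtain ⟨r, hr, hb⟩ := Metric.isOpen_iff.1 isClosed_closure.isOpen_compl x hx
      refine ⟨r, hr, fun y hy hyM => hb hy ?_⟩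
      rw [hM] at hyM
      exact hyM.1
    · push Not at hx
      obtain ⟨r, hr, hb⟩ := hx
      refine ⟨r / 2, by positivity, fun y hy hyM => hb ?_⟩
      rw [hM] at hyM
      rw [Metric.mem_ball, Real.dist_eq, abs_lt] at hy
      rw [← top_le_iff, ← hyM.2 (r / 2) (by positivity)]
      apply lintegral_mono_set
      apply inter_subset_inter_right
      apply Ioo_subset_Ioo <;> linarith
  have hAmeas : MeasurableSet {x | 0 < μ {x}} := by
    apply Set.Countable.measurableSet
    apply Measure.countable_meas_pos_of_disjoint_iUnion (fun x => measurableSet_singleton x)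
    intro x y hxy
    simpa [Function.onFun] using hxy
  have hclos : closure I = Icc a b := by rw [hI, closure_Ioo hab.ne]
  have hdu : Continuous (deriv u) := hu.continuous_deriv le_rfl
  set h : ℝ → ℝ := (M \ {x | 0 < μ {x}}).indicator (deriv u) with hh
  have hhm : Measurable h := hdu.measurable.indicator (hMmeas.diff hAmeas)
  have hMs : ∀ x, h x ≠ 0 → x ∈ M := fun x hx => (mem_of_indicator_ne_zero hx).1
  have hvh : ∀ x, deriv u x - v x = h x := by
    intro x
    rw [hv, hh]
    by_cases h1 : x ∈ M <;> by_cases h2 : 0 < μ {x} <;> simp [indicator, h1, h2]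
  obtain ⟨C, hC⟩ : ∃ C, ∀ x, |h x| ≤ C := by
    obtain ⟨C, hC⟩ := (isCompact_Icc (a := a) (b := b)).exists_bound_of_continuousOn hdu.continuousOn
    refine ⟨C, fun x => ?_⟩
    by_cases hx : h x = 0
    · rw [hx, abs_zero]
      exact (norm_nonneg _).trans (hC a ⟨le_rfl, hab.le⟩)
    · have hm := hMs x hx
      rw [hM] at hm
      have := hC x (hclos ▸ hm.1)
      rwa [hh, indicator_of_mem (mem_of_indicator_ne_zero hx)]
  have hinf : ∀ c d, a ≤ c → d ≤ b →
      (∃ x ∈ Ioo c d, h x ≠ 0) → ∫⁻ t in Ioo c d, (ENNReal.ofReal (f t))⁻¹ = ⊤ := by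
    rintro c d - - ⟨x, hx, hx0⟩
    have hm := hMs x hx0
    rw [hM] at hm
    have hr : 0 < min (x - c) (d - x) := lt_min (sub_pos.2 hx.1) (sub_pos.2 hx.2)
    rw [← top_le_iff, ← hm.2 _ hr]
    apply lintegral_mono_set
    refine inter_subset_right.trans (Ioo_subset_Ioo ?_ ?_)
    · linarith [min_le_left (x - c) (d - x)]
    · linarith [min_le_right (x - c) (d - x)]
  have hIae : ∀ᵐ x ∂μ, x ∈ Ioo a b := by
    rw [hI] at hμI
    exact hμI
  set lam : Measure ℝ := volume.restrict (Ioc a b) with hlam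
  set L : ℝ≥0∞ := lam univ ^ (1 / (1 : ℝ≥0∞).toReal - 1 / (2 : ℝ≥0∞).toReal) with hL
  have hLtop : L ≠ ⊤ := ENNReal.rpow_ne_top_of_nonneg (by norm_num) (by simp [hlam])
  set K : ℝ≥0∞ := μ univ ^ (1 / (2 : ℝ)) * (1 + L) with hK
  have hKtop : K ≠ ⊤ := ENNReal.mul_ne_top
    (ENNReal.rpow_ne_top_of_nonneg (by norm_num) (measure_ne_top _ _)) (by simp [hLtop])
  have main : ∀ ε : ℝ, 0 < ε → ∃ U : ℝ → ℝ, ContDiff ℝ 1 U ∧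
      eLpNorm (fun x => U x - u x) 2 μ ≤ ENNReal.ofReal ε * K ∧
      eLpNorm (fun x => deriv U x - v x) 2 μ ≤ ENNReal.ofReal ε * 2 := by
    intro ε hε
    obtain ⟨w, hw1, ⟨B, hw2⟩, hw3, hw4, hw5⟩ := aux_glue a b hab μ f hfmeas hfnonneg μs hsing hdecomp
      h hhm C hC hinf ε hε
    have hwi : Integrable w := aux_integrable a b w hw1 ⟨B, hw2⟩ hw3
    have hwL : MemLp w 2 (μ + lam) := MemLp.of_bound hw1.aestronglyMeasurable B
      (Eventually.of_forall hw2)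
    obtain ⟨g, hg, -⟩ := hwL.exists_boundedContinuous_eLpNorm_sub_le (by norm_num)
      (ENNReal.ofReal_pos.2 hε).ne'
    have hgc : Continuous (g : ℝ → ℝ) := g.continuous
    have hg1 : eLpNorm (w - ⇑g) 2 μ ≤ ENNReal.ofReal ε :=
      (eLpNorm_mono_measure _ (Measure.le_add_right le_rfl)).trans hg
    have hg2 : eLpNorm (w - ⇑g) 2 lam ≤ ENNReal.ofReal ε :=
      (eLpNorm_mono_measure _ (Measure.le_add_left le_rfl)).trans hg
    have hsm : Measurable (w - ⇑g) := hw1.sub hgc.measurable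
    have hg3 : eLpNorm (w - ⇑g) 1 lam ≤ ENNReal.ofReal ε * L :=
      (eLpNorm_le_eLpNorm_mul_rpow_measure_univ (p := 1) (q := 2) (by norm_num) hsm.aestronglyMeasurable).trans
        (by gcongr)
    have hderiv : ∀ x, HasDerivAt (fun y => ∫ t in a..y, g t) (g x) x := fun x =>
      intervalIntegral.integral_hasDerivAt_right (hgc.intervalIntegrable _ _)
        (hgc.stronglyMeasurableAtFilter _ _) hgc.continuousAt
    have hUd : ∀ x, HasDerivAt (fun y => u y - ∫ t in a..y, g t) (deriv u x - g x) x := fun x =>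
      ((hu.differentiable (by norm_num) x).hasDerivAt).sub (hderiv x)
    refine ⟨fun y => u y - ∫ t in a..y, g t, ?_, ?_, ?_⟩
    · rw [contDiff_one_iff_deriv]
      refine ⟨fun x => (hUd x).differentiableAt, ?_⟩
      have : deriv (fun y => u y - ∫ t in a..y, g t) = fun x => deriv u x - g x :=
        funext fun x => (hUd x).deriv
      rw [this]
      exact hdu.sub hgc
    · have hbd : ∀ᵐ x ∂μ, ‖(u x - ∫ t in a..x, g t) - u x‖ₑ ≤ ENNReal.ofReal ε * (1 + L) := by
        filter_upwards [hIae] with x hx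
        have e1 : (u x - ∫ t in a..x, g t) - u x = (∫ t in Ioc a x, (w - ⇑g) t) - ∫ t in Iic x, w t := by
          have e2 : ∫ t in Iic x, w t = ∫ t in Ioc a x, w t := by
            refine (setIntegral_eq_of_subset_of_forall_sdiff_eq_zero measurableSet_Iic
              (fun t ht => ht.2) (fun t ht => hw3 t (fun h' => ht.2 ⟨h'.1, ht.1⟩)))
          rw [e2, intervalIntegral.integral_of_le hx.1.le]
          simp only [Pi.sub_apply]
          rw [integral_sub hwi.integrableOn (hgc.integrableOn_Ioc)]
          ring
        rw [e1]
        refine (enorm_sub_le).trans ?_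
        rw [mul_add, mul_one, add_comm]
        gcongr
        · rw [Real.enorm_eq_ofReal_abs]
          exact ENNReal.ofReal_le_ofReal (hw5 x)
        · refine (enorm_integral_le_lintegral_enorm _).trans (le_trans ?_ hg3)
          rw [eLpNorm_one_eq_lintegral_enorm, hlam]
          exact lintegral_mono_set (Ioc_subset_Ioc_right hx.2.le)
      refine (eLpNorm_le_of_ae_enorm_bound hbd).trans ?_
      rw [hK]
      apply le_of_eq
      simp [smul_eq_mul]
      ring
    · have e : (fun x => deriv (fun y => u y - ∫ t in a..y, g t) x - v x)
          =ᵐ[μ] (w - ⇑g) - (w - (Ioc a b).indicator h) := by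
        filter_upwards [hIae] with x hx
        rw [(hUd x).deriv]
        simp only [Pi.sub_apply, indicator_of_mem (Ioo_subset_Ioc_self hx), ← hvh x]
        ring
      rw [eLpNorm_congr_ae e]
      refine (eLpNorm_sub_le hsm.aestronglyMeasurable
        (hw1.sub (hhm.indicator measurableSet_Ioc)).aestronglyMeasurable (by norm_num)).trans ?_
      rw [mul_two]
      exact add_le_add hg1 hw4
  choose U hU1 hU2 hU3 using fun n : ℕ => main (1 / ((n : ℝ) + 1)) (by positivity)
  have hlim : ∀ k : ℝ≥0∞, k ≠ ⊤ →
      Tendsto (fun n : ℕ => ENNReal.ofReal (1 / ((n : ℝ) + 1)) * k) atTop (nhds 0) := by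
    intro k hk
    have h1 := ENNReal.tendsto_ofReal (tendsto_one_div_add_atTop_nhds_zero_nat (𝕜 := ℝ))
    have h2 := ENNReal.Tendsto.mul_const h1 (Or.inr hk)
    simpa using h2
  exact ⟨U, hU1,
    tendsto_of_tendsto_of_tendsto_of_le_of_le tendsto_const_nhds (hlim K hKtop) (fun _ => zero_le) hU2,
    tendsto_of_tendsto_of_tendsto_of_le_of_le tendsto_const_nhds (hlim 2 (by norm_num))
      (fun _ => zero_le) hU3⟩
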